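/- Let A be a structurable division algebra over a field k with char(k) ≠ 2 and char(k) ≠ 3, let (x,s) ∈ A × S with (x,s) ≠ (0,0), and let (u,t) ∈ A × S satisfy the one-invertibility system: {x,u,z} = z + s·(t·z) for all z ∈ A, s·u = −(1/3)·U_x(t·x), and ψ(x, s·(t·x)) = 0. Set z₀ := u + t·x and define P : A → A by P(a) := U_x(a + (2/3)·ψ(z₀,a)·x) + s·(a + 2·ψ(z₀,a)·x). Then for every r ∈ S: (1/6)·ψ(x, U_x(r·x)) + ψ(x, s·(r·x)) − s·(r·s) = (1/2)·ψ(P(r), P(1)). -/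

import Mathlib

/-- The triple product `{x,y,z} := (x·ȳ)·z + (z·ȳ)·x − (z·x̄)·y` of a (not necessarily
associative or commutative) unital algebra `A` equipped with an involution `bar`. -/
def strTrip {A : Type*} [NonAssocRing A] (bar : A → A) (x y z : A) : A :=
  x * bar y * z + z * bar y * x - z * bar x * y

/-- `ψ(x,y) := x·ȳ − y·x̄`. -/
def strPsi {A : Type*} [NonAssocRing A] (bar : A → A) (x y : A) : A :=
  x * bar y - y * bar x

/-- `q_x(s) := (1/6)·ψ(x, U_x(s·x))`, where `U_x y := {x,y,x}`. -/
noncomputable def strQ (k : Type*) [Field k] {A : Type*} [NonAssocRing A] [Module k A]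
    (bar : A → A) (x s : A) : A :=
  (6 : k)⁻¹ • strPsi bar x (strTrip bar x (s * x) x)

/-- `(A, bar)` is a structurable algebra over `k`: `bar` is a `k`-linear involutive
anti-automorphism of `A`, and the operator identity
`[V_{x,y}, V_{z,w}] = V_{{x,y,z},w} − V_{z,{y,x,w}}` holds, where
`V_{x,y} z := strTrip bar x y z`. -/
def IsStructurable (k : Type*) [Field k] (A : Type*) [NonAssocRing A] [Module k A]
    (bar : A → A) : Prop :=
  (∀ x y : A, bar (x + y) = bar x + bar y) ∧
  (∀ (c : k) (x : A), bar (c • x) = c • bar x) ∧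
  (∀ x y : A, bar (x * y) = bar y * bar x) ∧
  (∀ x : A, bar (bar x) = x) ∧
  (∀ x y z w a : A,
    strTrip bar x y (strTrip bar z w a) - strTrip bar z w (strTrip bar x y a)
      = strTrip bar (strTrip bar x y z) w a - strTrip bar z (strTrip bar y x w) a)

/-- `A` is a (conjugate) division algebra: every nonzero `u ∈ A` has a conjugate
inverse `v`, i.e. `V_{u,v} = id`. -/
def IsConjDivision {A : Type*} [NonAssocRing A] (bar : A → A) : Prop :=
  ∀ u : A, u ≠ 0 → ∃ v : A, ∀ z : A, strTrip bar u v z = z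

/-- `P(a) := U_x(a + (2/3)·ψ(z₀,a)·x) + s·(a + 2·ψ(z₀,a)·x)`. -/
noncomputable def strP (k : Type*) [Field k] {A : Type*} [NonAssocRing A] [Module k A]
    (bar : A → A) (x s z₀ a : A) : A :=
  strTrip bar x (a + ((2 : k) / 3) • (strPsi bar z₀ a * x)) x
    + s * (a + (2 : k) • (strPsi bar z₀ a * x))

set_option linter.unusedSectionVars false
set_option linter.unusedSimpArgs false

namespace StrAux

section basics

variable {k : Type*} [Field k] {A : Type*} [NonAssocRing A] [Module k A]
    [SMulCommClass k A A] [IsScalarTower k A A] {bar : A → A}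

theorem bar_add (H : IsStructurable k A bar) (x y : A) : bar (x + y) = bar x + bar y := H.1 x y
theorem bar_smul (H : IsStructurable k A bar) (c : k) (x : A) : bar (c • x) = c • bar x :=
  H.2.1 c x
theorem bar_mul (H : IsStructurable k A bar) (x y : A) : bar (x * y) = bar y * bar x := H.2.2.1 x y
theorem bar_bar (H : IsStructurable k A bar) (x : A) : bar (bar x) = x := H.2.2.2.1 x
theorem bar_zero (H : IsStructurable k A bar) : bar 0 = 0 := by
  simpa using bar_smul H (0 : k) 0
theorem bar_neg (H : IsStructurable k A bar) (x : A) : bar (-x) = -bar x := by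
  simpa using bar_smul H (-1 : k) x
theorem bar_sub (H : IsStructurable k A bar) (x y : A) : bar (x - y) = bar x - bar y := by
  rw [sub_eq_add_neg, bar_add H, bar_neg H, sub_eq_add_neg]
theorem bar_one (H : IsStructurable k A bar) : bar 1 = 1 := by
  have := bar_mul H 1 (bar 1)
  rw [one_mul, bar_bar H, one_mul] at this
  exact this.symm

/-- The defining identity in Leibniz form. -/
theorem trip_trip (H : IsStructurable k A bar) (x y z w a : A) :
    strTrip bar x y (strTrip bar z w a) = strTrip bar (strTrip bar x y z) w a
      - strTrip bar z (strTrip bar y x w) a + strTrip bar z w (strTrip bar x y a) := by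
  have := H.2.2.2.2 x y z w a
  rw [sub_eq_iff_eq_add] at this
  exact this

theorem trip_zero (H : IsStructurable k A bar) (x y z w a : A) :
    strTrip bar x y (strTrip bar z w a) - strTrip bar z w (strTrip bar x y a)
      - strTrip bar (strTrip bar x y z) w a + strTrip bar z (strTrip bar y x w) a = 0 := by
  rw [H.2.2.2.2 x y z w a]; abel

theorem trip_zero_bar (H : IsStructurable k A bar) (x y z w a : A) :
    bar (strTrip bar x y (strTrip bar z w a) - strTrip bar z w (strTrip bar x y a)
      - strTrip bar (strTrip bar x y z) w a + strTrip bar z (strTrip bar y x w) a) = 0 := by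
  rw [trip_zero H, bar_zero H]

/-- Skew-alternativity, first half. -/
theorem skew_alt₁ (h2 : (2 : k) ≠ 0) (h3 : (3 : k) ≠ 0) (H : IsStructurable k A bar)
    {s : A} (hs : bar s = -s) (x y : A) :
    s * x * y - s * (x * y) = x * y * s - x * (y * s) := by
  have e1 := trip_zero_bar H (bar y) 1 s 1 (bar x)
  have e2 := trip_zero_bar H 1 s y x 1
  have e3 := trip_zero_bar H 1 (bar y) s 1 (bar x)
  have e4 := trip_zero H 1 s (bar x) (bar y) 1
  have e5 := trip_zero H (bar x) 1 s 1 y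
  have e6 := trip_zero H x 1 s 1 y
  simp only [strTrip, bar_add H, bar_sub H, bar_neg H, bar_mul H, bar_bar H, bar_one H, hs,
    mul_one, one_mul, mul_add, add_mul, mul_sub, sub_mul, mul_neg, neg_mul, neg_neg]
    at e1 e2 e3 e4 e5 e6
  have h6 : (6 : k) ≠ 0 := by
    have : (6 : k) = 2 * 3 := by norm_num
    rw [this]; exact mul_ne_zero h2 h3
  have key : (6 : k) • (s * x * y - s * (x * y) - (x * y * s - x * (y * s))) = 0 := by
    linear_combination (norm := module) (-2 : k) • e1 - e2 - e3 + e4 + e5 + (2 : k) • e6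
  exact sub_eq_zero.1 ((smul_eq_zero.1 key).resolve_left h6)

/-- Skew-alternativity, second half. -/
theorem skew_alt₂ (h2 : (2 : k) ≠ 0) (h3 : (3 : k) ≠ 0) (H : IsStructurable k A bar)
    {s : A} (hs : bar s = -s) (x y : A) :
    s * x * y - s * (x * y) = -(x * s * y - x * (s * y)) := by
  have e0 := skew_alt₁ h2 h3 H hs y x
  have e1 := trip_zero H 1 (bar y) s (bar x) 1
  have e2 := trip_zero_bar H (bar x) s y 1 1
  have e3 := trip_zero H x 1 1 (bar y) s
  simp only [strTrip, bar_add H, bar_sub H, bar_neg H, bar_mul H, bar_bar H, bar_one H, hs,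
    mul_one, one_mul, mul_add, add_mul, mul_sub, sub_mul, mul_neg, neg_mul, neg_neg]
    at e1 e2 e3
  have key : (2 : k) • (s * x * y - s * (x * y) + (x * s * y - x * (s * y))) = 0 := by
    linear_combination (norm := module) (-2 : k) • e0 - e1 + (2 : k) • e2 - e3
  exact eq_neg_of_add_eq_zero_left ((smul_eq_zero.1 key).resolve_left h2)

theorem psi_trip (x y z : A) :
    strPsi bar x y * z = strTrip bar x z y - strTrip bar y z x := by
  simp only [strTrip, strPsi, sub_mul]; abel

theorem bar_psi (H : IsStructurable k A bar) (x y : A) :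
    bar (strPsi bar x y) = -strPsi bar x y := by
  simp only [strPsi, bar_sub H, bar_mul H, bar_bar H]; abel

/-- The degree three consequence of skew-alternativity. -/
theorem k2_aux (h2 : (2 : k) ≠ 0) (h3 : (3 : k) ≠ 0) (H : IsStructurable k A bar)
    {s : A} (hs : bar s = -s) (x y : A) :
    strPsi bar (strTrip bar x y s) 1 + strPsi bar s (strTrip bar x y 1)
      = -((2 : k) • strPsi bar x (s * y)) := by
  -- associators with two skew elements
  have g : ∀ p q : A, bar p = -p →
      s * p * q - s * (p * q) + (s * q * p - s * (q * p)) = 0 := by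
    intro p q hp
    have a1 := skew_alt₂ h2 h3 H hp s q
    have a2 := skew_alt₁ h2 h3 H hp s q
    linear_combination (norm := module) a1 - a2
  have b1 := skew_alt₁ h2 h3 H hs (bar x) y
  have b2 := skew_alt₁ h2 h3 H hs (bar y) x
  have b3 := skew_alt₁ h2 h3 H hs x (bar y)
  have g1 := g (x - bar x) y (by rw [bar_sub H, bar_bar H]; abel)
  have g3 := g (y - bar y) x (by rw [bar_sub H, bar_bar H]; abel)
  simp only [mul_sub, sub_mul] at g1 g3
  simp only [strPsi, strTrip, bar_add H, bar_sub H, bar_neg H, bar_mul H, bar_bar H, bar_one H, hs,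
    mul_one, one_mul, mul_add, add_mul, mul_sub, sub_mul, mul_neg, neg_mul, neg_neg]
  linear_combination (norm := module) b1 - b2 - (2 : k) • b3 + (2 : k) • g1 - (2 : k) • g3
end basics
end StrAux

namespace StrAux

/-- The standing hypotheses. -/
structure Good (k : Type*) [Field k] (A : Type*) [NonAssocRing A] [Module k A]
    (bar : A → A) : Prop where
  H : IsStructurable k A bar
  h2 : (2 : k) ≠ 0
  h3 : (3 : k) ≠ 0

section lie0

attribute [local instance] LieRing.ofAssociativeRing

variable {k : Type*} [Field k] {A : Type*} [NonAssocRing A] [Module k A]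
    [SMulCommClass k A A] [IsScalarTower k A A] {bar : A → A}

/-- Skew elements. -/
def SS (G : Good k A bar) : Submodule k A where
  carrier := {s | bar s = -s}
  add_mem' := by
    intro a b ha hb
    simp only [Set.mem_ofPred_eq] at *
    rw [bar_add G.H, ha, hb]; abel
  zero_mem' := by simp [bar_zero G.H]
  smul_mem' := by
    intro c x hx
    simp only [Set.mem_ofPred_eq] at *
    rw [bar_smul G.H, hx, smul_neg]

variable (G : Good k A bar)

/-- The bilinear map `ψ`. -/
def psi : A →ₗ[k] A →ₗ[k] SS G :=
  LinearMap.mk₂ k (fun x y => ⟨strPsi bar x y, bar_psi G.H x y⟩)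
    (by intros; ext; simp only [strPsi, Submodule.coe_add, bar_add G.H, add_mul, mul_add]; abel)
    (by intros; ext; simp [strPsi, bar_smul G.H, smul_sub, smul_mul_assoc, mul_smul_comm])
    (by intros; ext; simp only [strPsi, Submodule.coe_add, bar_add G.H, add_mul, mul_add]; abel)
    (by intros; ext; simp [strPsi, bar_smul G.H, smul_sub, smul_mul_assoc, mul_smul_comm])

theorem psi_coe (x y : A) : (psi G x y : A) = strPsi bar x y := rfl

theorem psi_swap (x y : A) : psi G x y = -psi G y x := by
  ext; simp [psi_coe, strPsi]

/-- Left multiplication by skew elements. -/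
def lm : SS G →ₗ[k] A →ₗ[k] A :=
  LinearMap.mk₂ k (fun s y => (s : A) * y)
    (by intros; simp [add_mul]) (by intros; simp [smul_mul_assoc, mul_smul_comm]) (by intros; simp [mul_add]) (by intros; simp [smul_mul_assoc, mul_smul_comm])

theorem lm_apply (s : SS G) (y : A) : lm G s y = (s : A) * y := rfl

/-- The operators `V`. -/
def VE : A →ₗ[k] A →ₗ[k] Module.End k A :=
  LinearMap.mk₂ k (fun x y =>
      { toFun := fun z => strTrip bar x y z
        map_add' := by intros; simp only [strTrip, add_mul, mul_add]; abel
        map_smul' := by intros; simp [strTrip, smul_add, smul_sub, smul_mul_assoc, mul_smul_comm] })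
    (by intros; ext; simp only [strTrip, LinearMap.coe_mk, AddHom.coe_mk, LinearMap.add_apply,
          bar_add G.H, add_mul, mul_add]; abel)
    (by intros; ext; simp [strTrip, bar_smul G.H, smul_add, smul_sub, smul_mul_assoc, mul_smul_comm])
    (by intros; ext; simp only [strTrip, LinearMap.coe_mk, AddHom.coe_mk, LinearMap.add_apply,
          bar_add G.H, add_mul, mul_add]; abel)
    (by intros; ext; simp [strTrip, bar_smul G.H, smul_add, smul_sub, smul_mul_assoc, mul_smul_comm])

theorem VE_apply (x y z : A) : VE G x y z = strTrip bar x y z := rfl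

theorem SS_half (s : SS G) : psi G s 1 = (2 : k) • s := by
  ext
  have := s.2
  change bar (s : A) = - (s : A) at this
  simp only [psi_coe, strPsi, bar_one G.H, this, Submodule.coe_smul, mul_one, one_mul]
  module

theorem VE_J (x y z w a : A) : VE G x y (VE G z w a) = VE G (VE G x y z) w a
      - VE G z (VE G y x w) a + VE G z w (VE G x y a) := trip_trip G.H x y z w a

theorem psi_VE (x y z : A) : lm G (psi G x y) z = VE G x z y - VE G y z x := psi_trip x y z

theorem k2_aux' (s : SS G) (x y : A) :
    psi G (VE G x y s) 1 + psi G s (VE G x y 1) = -((2 : k) • psi G x (lm G s y)) := by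
  ext
  exact k2_aux G.h2 G.h3 G.H s.2 x y

theorem k2 (s : SS G) (x y z : A) :
    VE G x y (lm G s z) = -lm G (psi G x (lm G s y)) z - lm G s (VE G y x z) := by
  have e1 := VE_J G x y s z 1
  have e2 := VE_J G x y 1 z s
  have e3 := congrArg (fun q => lm G q z) (k2_aux' G s x y)
  have e4 := congrArg (fun q => lm G q z) (SS_half G s)
  have e5 := congrArg (fun q => lm G q (VE G y x z)) (SS_half G s)
  simp only [map_add, map_neg, map_smul, LinearMap.add_apply, LinearMap.neg_apply,
    LinearMap.smul_apply, psi_VE] at e3 e4 e5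
  have e6 := congrArg (VE G x y) e4
  simp only [map_sub, map_smul] at e6
  have key : (2 : k) • (VE G x y (lm G s z)
      - (-lm G (psi G x (lm G s y)) z - lm G s (VE G y x z))) = 0 := by
    simp only [psi_VE]
    linear_combination (norm := module) e1 - e2 + e3 - e6 - e5
  exact sub_eq_zero.1 ((smul_eq_zero.1 key).resolve_left G.h2)

theorem k1 (x y a b : A) :
    -psi G x (lm G (psi G a b) y) = psi G (VE G x y a) b + psi G a (VE G x y b) := by
  have e1 := VE_J G x y a 1 b
  have e2 := VE_J G x y b 1 a
  have e3 := k2 G (psi G a b) x y 1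
  have hh : ∀ s : SS G, lm G s 1 = s := fun s => by simp [lm_apply]
  have : lm G (-psi G x (lm G (psi G a b) y)) 1
      = lm G (psi G (VE G x y a) b + psi G a (VE G x y b)) 1 := by
    simp only [map_add, map_neg, LinearMap.add_apply, LinearMap.neg_apply, psi_VE, map_sub,
      LinearMap.sub_apply] at e1 e2 e3 ⊢
    linear_combination (norm := module) e1 - e2 - e3
  rw [hh, hh] at this
  exact Subtype.ext this

theorem k7 (s : SS G) (y y' a : A) :
    lm G s (lm G (psi G y y') a) = VE G (lm G s y) y' a - VE G (lm G s y') y a := by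
  have e1 := k2 G s a y y'
  have e2 := k2 G s a y' y
  simp only [psi_VE, map_sub] at e1 e2 ⊢
  linear_combination (norm := module) e1 - e2

/-- The ambient Lie algebra of quadruples. -/
abbrev Quad := Module.End k A × Module.End k A × Module.End k (SS G) × Module.End k (SS G)

/-- The degree zero part of the Lie algebra. -/
def L0 : LieSubalgebra k (Quad G) where
  carrier := {T | (∀ x y, T.2.2.1 (psi G x y) = psi G (T.1 x) y + psi G x (T.1 y)) ∧
    (∀ x y, T.2.2.2 (psi G x y) = psi G (T.2.1 x) y + psi G x (T.2.1 y)) ∧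
    (∀ s y, T.1 (lm G s y) = lm G (T.2.2.1 s) y + lm G s (T.2.1 y)) ∧
    (∀ s y, T.2.1 (lm G s y) = lm G (T.2.2.2 s) y + lm G s (T.1 y)) ∧
    (∀ x y z, T.1 (VE G x y z) = VE G (T.1 x) y z + VE G x (T.2.1 y) z + VE G x y (T.1 z)) ∧
    (∀ x y z, T.2.1 (VE G x y z) = VE G (T.2.1 x) y z + VE G x (T.1 y) z + VE G x y (T.2.1 z))}
  add_mem' := by
    rintro a b ⟨h1, h2, h3, h4, h5, h6⟩ ⟨g1, g2, g3, g4, g5, g6⟩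
    refine ⟨?_, ?_, ?_, ?_, ?_, ?_⟩ <;> intros <;>
      simp only [Prod.fst_add, Prod.snd_add, LinearMap.add_apply, map_add, h1, h2, h3, h4, h5, h6,
        g1, g2, g3, g4, g5, g6] <;> abel
  zero_mem' := by
    refine ⟨?_, ?_, ?_, ?_, ?_, ?_⟩ <;> intros <;> simp
  smul_mem' := by
    rintro c a ⟨h1, h2, h3, h4, h5, h6⟩
    refine ⟨?_, ?_, ?_, ?_, ?_, ?_⟩ <;> intros <;>
      simp only [Prod.smul_fst, Prod.smul_snd, LinearMap.smul_apply, map_smul, h1, h2, h3, h4, h5,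
        h6, smul_add]
  lie_mem' := by
    rintro a b ⟨h1, h2, h3, h4, h5, h6⟩ ⟨g1, g2, g3, g4, g5, g6⟩
    refine ⟨?_, ?_, ?_, ?_, ?_, ?_⟩ <;> intros <;>
      simp only [LieRing.of_associative_ring_bracket, Prod.fst_sub, Prod.snd_sub, Prod.fst_mul,
        Prod.snd_mul,
        LinearMap.sub_apply, Module.End.mul_apply, map_sub, map_add, LinearMap.add_apply,
        h1, h2, h3, h4, h5, h6,
        g1, g2, g3, g4, g5, g6] <;> abel

/-- Action on the `A` in degree `1`. -/
def p1 : L0 G →ₗ[k] Module.End k A where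
  toFun T := T.1.1
  map_add' _ _ := rfl
  map_smul' _ _ := rfl

/-- Action on the `A` in degree `-1`. -/
def p2 : L0 G →ₗ[k] Module.End k A where
  toFun T := T.1.2.1
  map_add' _ _ := rfl
  map_smul' _ _ := rfl

/-- Action on the `S` in degree `2`. -/
def p3 : L0 G →ₗ[k] Module.End k (SS G) where
  toFun T := T.1.2.2.1
  map_add' _ _ := rfl
  map_smul' _ _ := rfl

/-- Action on the `S` in degree `-2`. -/
def p4 : L0 G →ₗ[k] Module.End k (SS G) where
  toFun T := T.1.2.2.2
  map_add' _ _ := rfl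
  map_smul' _ _ := rfl

theorem p1_lie (T U : L0 G) (x : A) : p1 G ⁅T, U⁆ x = p1 G T (p1 G U x) - p1 G U (p1 G T x) := rfl
theorem p2_lie (T U : L0 G) (x : A) : p2 G ⁅T, U⁆ x = p2 G T (p2 G U x) - p2 G U (p2 G T x) := rfl
theorem p3_lie (T U : L0 G) (x : SS G) :
    p3 G ⁅T, U⁆ x = p3 G T (p3 G U x) - p3 G U (p3 G T x) := rfl
theorem p4_lie (T U : L0 G) (x : SS G) :
    p4 G ⁅T, U⁆ x = p4 G T (p4 G U x) - p4 G U (p4 G T x) := rfl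

theorem p3_psi (T : L0 G) (x y : A) :
    p3 G T (psi G x y) = psi G (p1 G T x) y + psi G x (p1 G T y) := T.2.1 x y
theorem p4_psi (T : L0 G) (x y : A) :
    p4 G T (psi G x y) = psi G (p2 G T x) y + psi G x (p2 G T y) := T.2.2.1 x y
theorem p1_lm (T : L0 G) (s : SS G) (y : A) :
    p1 G T (lm G s y) = lm G (p3 G T s) y + lm G s (p2 G T y) := T.2.2.2.1 s y
theorem p2_lm (T : L0 G) (s : SS G) (y : A) :
    p2 G T (lm G s y) = lm G (p4 G T s) y + lm G s (p1 G T y) := T.2.2.2.2.1 s y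
theorem p1_VE (T : L0 G) (x y z : A) : p1 G T (VE G x y z)
    = VE G (p1 G T x) y z + VE G x (p2 G T y) z + VE G x y (p1 G T z) := T.2.2.2.2.2.1 x y z
theorem p2_VE (T : L0 G) (x y z : A) : p2 G T (VE G x y z)
    = VE G (p2 G T x) y z + VE G x (p1 G T y) z + VE G x y (p2 G T z) := T.2.2.2.2.2.2 x y z

theorem End_zero_of (f : Module.End k (SS G)) (g : Module.End k A) (hg : g = 0)
    (h : ∀ x y, f (psi G x y) = psi G (g x) y + psi G x (g y)) : f = 0 := by
  ext1 s
  have e := h s 1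
  simp only [SS_half, hg, LinearMap.zero_apply, map_zero, map_smul, add_zero] at e
  exact (smul_eq_zero.1 e).resolve_left G.h2

theorem L0_zero (T : L0 G) (hT : p1 G T = 0) : T = 0 := by
  have h2 : p2 G T = 0 := by
    ext1 y
    have e := p1_VE G T 1 y 1
    simp only [hT, LinearMap.zero_apply, map_zero, zero_add, add_zero] at e
    rw [VE_apply] at e
    simp only [strTrip, one_mul, mul_one, bar_one G.H] at e
    set w := p2 G T y with hw
    have e' := congrArg bar e
    simp only [bar_add G.H, bar_sub G.H, bar_bar G.H, bar_zero G.H] at e'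
    have : (3 : k) • w = 0 := by linear_combination (norm := module) (-1 : k) • e - (2 : k) • e'
    exact (smul_eq_zero.1 this).resolve_left G.h3
  have h3 : p3 G T = 0 := End_zero_of G _ _ hT (p3_psi G T)
  have h4 : p4 G T = 0 := End_zero_of G _ _ h2 (p4_psi G T)
  apply Subtype.ext
  exact Prod.ext hT (Prod.ext h2 (Prod.ext h3 h4))

theorem L0_ext {T U : L0 G} (h : ∀ x, p1 G T x = p1 G U x) : T = U := by
  rw [← sub_eq_zero]
  apply L0_zero
  ext1 x
  simp [h]

/-- `V` as an element of the degree zero part. -/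
def VL : A →ₗ[k] A →ₗ[k] L0 G :=
  LinearMap.mk₂ k (fun x y => ⟨(VE G x y, -VE G y x,
      -((psi G x) ∘ₗ ((lm G).flip y)), (psi G y) ∘ₗ ((lm G).flip x)), by
        refine ⟨?_, ?_, ?_, ?_, ?_, ?_⟩
        · intro a b
          simpa using k1 G x y a b
        · intro a b
          have := k1 G y x a b
          simp only [LinearMap.comp_apply, LinearMap.flip_apply, LinearMap.neg_apply, map_neg]
          rw [← neg_inj, this]; abel
        · intro s z
          have := k2 G s x y z
          simp only [LinearMap.comp_apply, LinearMap.flip_apply, LinearMap.neg_apply, map_neg]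
          rw [this]; abel
        · intro s z
          have := k2 G s y x z
          simp only [LinearMap.comp_apply, LinearMap.flip_apply, LinearMap.neg_apply, map_neg]
          rw [this]; abel
        · intro a b c
          have := VE_J G x y a b c
          simp only [LinearMap.neg_apply, map_neg]
          rw [this]; abel
        · intro a b c
          have := VE_J G y x a b c
          simp only [LinearMap.neg_apply, map_neg]
          rw [this]; abel⟩)
    (fun _ _ _ => L0_ext G fun _ => by simp [p1])
    (fun _ _ _ => L0_ext G fun _ => by simp [p1])
    (fun _ _ _ => L0_ext G fun _ => by simp [p1])
    (fun _ _ _ => L0_ext G fun _ => by simp [p1])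

theorem p1_VL (x y z : A) : p1 G (VL G x y) z = VE G x y z := rfl
theorem p2_VL (x y z : A) : p2 G (VL G x y) z = -VE G y x z := rfl
theorem p3_VL (x y : A) (s : SS G) : p3 G (VL G x y) s = -psi G x (lm G s y) := rfl
theorem p4_VL (x y : A) (s : SS G) : p4 G (VL G x y) s = psi G y (lm G s x) := rfl

theorem lie_VL (T : L0 G) (x y : A) :
    ⁅T, VL G x y⁆ = VL G (p1 G T x) y + VL G x (p2 G T y) := by
  apply L0_ext
  intro z
  simp only [p1_lie, p1_VL, p1_VE, map_add, LinearMap.add_apply]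
  abel

theorem VL_lie (T : L0 G) (x y : A) :
    ⁅VL G x y, T⁆ = -VL G (p1 G T x) y - VL G x (p2 G T y) := by
  rw [← lie_skew, lie_VL]; abel

/-- `[s, t]` as an element of the degree zero part. -/
def WL : SS G →ₗ[k] SS G →ₗ[k] L0 G :=
  LinearMap.mk₂ k (fun s t => (2 : k)⁻¹ • (VL G (lm G s t) 1 - VL G s t))
    (fun _ _ _ => by
      rw [← smul_add]; congr 1
      simp only [map_add, LinearMap.add_apply, Submodule.coe_add]; abel)
    (fun c _ _ => by
      rw [smul_comm c]; congr 1
      simp only [map_smul, LinearMap.smul_apply, Submodule.coe_smul, smul_sub])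
    (fun _ _ _ => by
      rw [← smul_add]; congr 1
      simp only [map_add, LinearMap.add_apply, Submodule.coe_add]; abel)
    (fun c _ _ => by
      rw [smul_comm c]; congr 1
      simp only [map_smul, LinearMap.smul_apply, Submodule.coe_smul, smul_sub])

theorem WL_def (s t : SS G) : WL G s t = (2 : k)⁻¹ • (VL G (lm G s t) 1 - VL G s t) := rfl

theorem k6 (s t : SS G) (a : A) :
    VE G (lm G s t) 1 a - VE G s t a = (2 : k) • lm G s (lm G t a) := by
  have := k7 G s t 1 a
  rw [SS_half] at this
  simp only [map_smul, LinearMap.smul_apply] at this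
  rw [this]
  simp [lm_apply]

theorem p1_WL (s t : SS G) (a : A) : p1 G (WL G s t) a = lm G s (lm G t a) := by
  have h2 := G.h2
  rw [WL_def, map_smul, map_sub, LinearMap.smul_apply, LinearMap.sub_apply, p1_VL, p1_VL, k6,
    smul_smul, inv_mul_cancel₀ h2, one_smul]

theorem p2_WL (s t : SS G) (a : A) : p2 G (WL G s t) a = -lm G t (lm G s a) := by
  have h2 := G.h2
  have e := k6 G t s a
  have hs : bar (s : A) = - (s : A) := s.2
  have ht : bar (t : A) = - (t : A) := t.2
  have e' : VE G 1 (lm G s t) a = VE G (lm G t s) 1 a := by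
    simp only [VE_apply, strTrip, lm_apply, bar_mul G.H, bar_one G.H, hs, ht, one_mul, mul_one,
      neg_mul, mul_neg, neg_neg]
  rw [WL_def, map_smul, map_sub, LinearMap.smul_apply, LinearMap.sub_apply, p2_VL, p2_VL, e',
    show -VE G (lm G t s) 1 a - -VE G t s a = -(VE G (lm G t s) 1 a - VE G t s a) by abel, e,
    smul_neg, smul_smul, inv_mul_cancel₀ h2, one_smul]

theorem WL_psi_right (s : SS G) (y y' : A) :
    WL G s (psi G y y') = VL G (lm G s y) y' - VL G (lm G s y') y := by
  apply L0_ext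
  intro a
  rw [p1_WL, map_sub, LinearMap.sub_apply, p1_VL, p1_VL, k7]

/-- The grading reversing involution of the degree zero part. -/
def sw (T : L0 G) : L0 G := ⟨(T.1.2.1, T.1.1, T.1.2.2.2, T.1.2.2.1),
  ⟨T.2.2.1, T.2.1, T.2.2.2.2.1, T.2.2.2.1, T.2.2.2.2.2.2, T.2.2.2.2.2.1⟩⟩

theorem p1_sw (T : L0 G) : p1 G (sw G T) = p2 G T := rfl
theorem p2_sw (T : L0 G) : p2 G (sw G T) = p1 G T := rfl
theorem p3_sw (T : L0 G) : p3 G (sw G T) = p4 G T := rfl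
theorem p4_sw (T : L0 G) : p4 G (sw G T) = p3 G T := rfl

theorem L0_ext' {T U : L0 G} (h : ∀ x, p2 G T x = p2 G U x) : T = U := by
  have : sw G T = sw G U := L0_ext G h
  have e := congrArg (sw G) this
  exact e

theorem WL_psi_left (t : SS G) (x x' : A) :
    WL G (psi G x x') t = VL G x' (lm G t x) - VL G x (lm G t x') := by
  apply L0_ext'
  intro a
  rw [p2_WL, map_sub, LinearMap.sub_apply, p2_VL, p2_VL, k7]
  abel

theorem lie_WL (T : L0 G) (s t : SS G) :
    ⁅T, WL G s t⁆ = WL G (p3 G T s) t + WL G s (p4 G T t) := by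
  apply L0_ext
  intro z
  simp only [p1_lie, p1_WL, map_add, LinearMap.add_apply, p1_lm, p2_lm]
  abel

theorem WL_lie (T : L0 G) (s t : SS G) :
    ⁅WL G s t, T⁆ = -WL G (p3 G T s) t - WL G s (p4 G T t) := by
  rw [← lie_skew, lie_WL]; abel

theorem p3_WL (s t s' : SS G) :
    p3 G (WL G s t) s' = (2 : k)⁻¹ • (psi G s' (lm G s t) + psi G s (lm G s' t)) := by
  rw [WL_def, map_smul, map_sub, LinearMap.smul_apply, LinearMap.sub_apply, p3_VL, p3_VL,
    psi_swap G (lm G s t)]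
  simp only [lm_apply, mul_one, neg_neg, sub_neg_eq_add]

theorem p3_WL_symm (s t s' : SS G) : p3 G (WL G s t) s' = p3 G (WL G s' t) s := by
  rw [p3_WL, p3_WL, add_comm]

theorem p4_WL (s t t' : SS G) :
    p4 G (WL G s t) t' = -((2 : k)⁻¹ • (psi G t' (lm G t s) + psi G t (lm G t' s))) := by
  have e := WL_psi_left G t s 1
  rw [SS_half, map_smul, LinearMap.smul_apply] at e
  have e' : (2 : k) • p4 G (WL G s t) t' = -(psi G t' (lm G t s) + psi G t (lm G t' s)) := by
    have e2 := congrArg (fun T => p4 G T t') e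
    simp only [map_smul, map_sub, LinearMap.smul_apply, LinearMap.sub_apply, p4_VL] at e2
    rw [e2, psi_swap G (lm G t s)]
    simp only [lm_apply, mul_one]
    abel
  rw [← smul_neg, ← e', smul_smul, inv_mul_cancel₀ G.h2, one_smul]

theorem p4_WL_symm (s t t' : SS G) : p4 G (WL G s t) t' = p4 G (WL G s t') t := by
  rw [p4_WL, p4_WL, add_comm]

/-- The underlying space of the five-graded Lie algebra. -/
abbrev L5 := SS G × A × L0 G × A × SS G

/-- Degree `-2` component of the bracket. -/
def bA (X Y : L5 G) : SS G :=
  p4 G X.2.2.1 Y.1 - p4 G Y.2.2.1 X.1 + psi G X.2.1 Y.2.1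
/-- Degree `-1` component of the bracket. -/
def bB (X Y : L5 G) : A :=
  p2 G X.2.2.1 Y.2.1 - p2 G Y.2.2.1 X.2.1 + lm G X.1 Y.2.2.2.1 - lm G Y.1 X.2.2.2.1
/-- Degree `0` component of the bracket. -/
def bC (X Y : L5 G) : L0 G :=
  ⁅X.2.2.1, Y.2.2.1⁆ + VL G X.2.2.2.1 Y.2.1 - VL G Y.2.2.2.1 X.2.1
    + WL G X.2.2.2.2 Y.1 - WL G Y.2.2.2.2 X.1
/-- Degree `1` component of the bracket. -/
def bD (X Y : L5 G) : A :=
  p1 G X.2.2.1 Y.2.2.2.1 - p1 G Y.2.2.1 X.2.2.2.1 + lm G X.2.2.2.2 Y.2.1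
    - lm G Y.2.2.2.2 X.2.1
/-- Degree `2` component of the bracket. -/
def bE (X Y : L5 G) : SS G :=
  p3 G X.2.2.1 Y.2.2.2.2 - p3 G Y.2.2.1 X.2.2.2.2 + psi G X.2.2.2.1 Y.2.2.2.1

/-- The Lie bracket. -/
def br0 (X Y : L5 G) : L5 G := (bA G X Y, bB G X Y, bC G X Y, bD G X Y, bE G X Y)

set_option maxHeartbeats 4000000 in
theorem bA_jac (X Y Z : L5 G) :
    bA G X (br0 G Y Z) = bA G (br0 G X Y) Z + bA G Y (br0 G X Z) := by
  obtain ⟨r1, a1, T1, b1, s1⟩ := X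
  obtain ⟨r2, a2, T2, b2, s2⟩ := Y
  obtain ⟨r3, a3, T3, b3, s3⟩ := Z
  simp only [br0, bA, bB, bC, map_add, map_sub, LinearMap.add_apply, LinearMap.sub_apply, p4_lie,
    p4_psi, p4_VL]
  rw [p4_WL_symm G s1 r3 r2, p4_WL_symm G s2 r3 r1, p4_WL_symm G s3 r2 r1,
    psi_swap G (p2 G T1 a2) a3, psi_swap G (p2 G T2 a1) a3, psi_swap G (p2 G T3 a1) a2,
    psi_swap G (lm G r1 b2) a3, psi_swap G (lm G r2 b1) a3]
  try rw [psi_swap G (p2 G T2 a3) a1]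
  try rw [psi_swap G (p2 G T1 a3) a2]
  abel

set_option maxHeartbeats 4000000 in
theorem bE_jac (X Y Z : L5 G) :
    bE G X (br0 G Y Z) = bE G (br0 G X Y) Z + bE G Y (br0 G X Z) := by
  obtain ⟨r1, a1, T1, b1, s1⟩ := X
  obtain ⟨r2, a2, T2, b2, s2⟩ := Y
  obtain ⟨r3, a3, T3, b3, s3⟩ := Z
  simp only [br0, bE, bD, bC, map_add, map_sub, LinearMap.add_apply, LinearMap.sub_apply, p3_lie,
    p3_psi, p3_VL]
  rw [p3_WL_symm G s3 r1 s2, p3_WL_symm G s3 r2 s1, p3_WL_symm G s2 r3 s1,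
    psi_swap G (p1 G T1 b2) b3, psi_swap G (p1 G T2 b1) b3, psi_swap G (p1 G T3 b1) b2,
    psi_swap G (lm G s1 a2) b3, psi_swap G (lm G s2 a1) b3]
  abel

theorem bB_jac (X Y Z : L5 G) :
    bB G X (br0 G Y Z) = bB G (br0 G X Y) Z + bB G Y (br0 G X Z) := by
  obtain ⟨r1, a1, T1, b1, s1⟩ := X
  obtain ⟨r2, a2, T2, b2, s2⟩ := Y
  obtain ⟨r3, a3, T3, b3, s3⟩ := Z
  simp only [br0, bA, bB, bC, bD, map_add, map_sub, LinearMap.add_apply, LinearMap.sub_apply,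
    p2_lie, p2_lm, p2_VL, p2_WL, psi_VE]
  abel

theorem bD_jac (X Y Z : L5 G) :
    bD G X (br0 G Y Z) = bD G (br0 G X Y) Z + bD G Y (br0 G X Z) := by
  obtain ⟨r1, a1, T1, b1, s1⟩ := X
  obtain ⟨r2, a2, T2, b2, s2⟩ := Y
  obtain ⟨r3, a3, T3, b3, s3⟩ := Z
  simp only [br0, bE, bB, bC, bD, map_add, map_sub, LinearMap.add_apply, LinearMap.sub_apply,
    p1_lie, p1_lm, p1_VL, p1_WL, psi_VE]
  abel

set_option maxHeartbeats 4000000 in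
theorem bC_jac (X Y Z : L5 G) :
    bC G X (br0 G Y Z) = bC G (br0 G X Y) Z + bC G Y (br0 G X Z) := by
  obtain ⟨r1, a1, T1, b1, s1⟩ := X
  obtain ⟨r2, a2, T2, b2, s2⟩ := Y
  obtain ⟨r3, a3, T3, b3, s3⟩ := Z
  have h := leibniz_lie T1 T2 T3
  simp only [br0, bA, bB, bC, bD, bE, map_add, map_sub, LinearMap.add_apply, LinearMap.sub_apply,
    lie_add, lie_sub, add_lie, sub_lie, lie_VL, VL_lie, lie_WL, WL_lie, WL_psi_left, WL_psi_right]
  rw [h]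
  abel

/-- The Lie bracket as a bilinear map. -/
def br : L5 G →ₗ[k] L5 G →ₗ[k] L5 G :=
  LinearMap.mk₂ k (br0 G)
    (by
      rintro ⟨r1, a1, T1, b1, s1⟩ ⟨r2, a2, T2, b2, s2⟩ ⟨r3, a3, T3, b3, s3⟩
      simp only [br0, bA, bB, bC, bD, bE, Prod.mk_add_mk, map_add, LinearMap.add_apply, add_lie]
      refine Prod.ext ?_ (Prod.ext ?_ (Prod.ext ?_ (Prod.ext ?_ ?_))) <;> dsimp only <;> abel)
    (by
      rintro c ⟨r1, a1, T1, b1, s1⟩ ⟨r2, a2, T2, b2, s2⟩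
      simp only [br0, bA, bB, bC, bD, bE, Prod.smul_mk, map_smul, LinearMap.smul_apply, smul_lie,
        smul_add, smul_sub])
    (by
      rintro ⟨r1, a1, T1, b1, s1⟩ ⟨r2, a2, T2, b2, s2⟩ ⟨r3, a3, T3, b3, s3⟩
      simp only [br0, bA, bB, bC, bD, bE, Prod.mk_add_mk, map_add, LinearMap.add_apply, lie_add]
      refine Prod.ext ?_ (Prod.ext ?_ (Prod.ext ?_ (Prod.ext ?_ ?_))) <;> dsimp only <;> abel)
    (by
      rintro c ⟨r1, a1, T1, b1, s1⟩ ⟨r2, a2, T2, b2, s2⟩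
      simp only [br0, bA, bB, bC, bD, bE, Prod.smul_mk, map_smul, LinearMap.smul_apply, lie_smul,
        smul_add, smul_sub])

theorem br_apply (X Y : L5 G) : br G X Y = br0 G X Y := rfl

theorem br_jac (X Y Z : L5 G) :
    br G X (br G Y Z) = br G (br G X Y) Z + br G Y (br G X Z) :=
  Prod.ext (bA_jac G X Y Z) (Prod.ext (bB_jac G X Y Z) (Prod.ext (bC_jac G X Y Z)
    (Prod.ext (bD_jac G X Y Z) (bE_jac G X Y Z))))

set_option maxHeartbeats 4000000 in
theorem br_swap (X Y : L5 G) : br G X Y = -br G Y X := by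
  obtain ⟨r1, a1, T1, b1, s1⟩ := X
  obtain ⟨r2, a2, T2, b2, s2⟩ := Y
  rw [br_apply, br_apply]
  simp only [br0, bA, bB, bC, bD, bE]
  rw [psi_swap G a1 a2, psi_swap G b1 b2, ← lie_skew T1 T2]
  refine Prod.ext ?_ (Prod.ext ?_ (Prod.ext ?_ (Prod.ext ?_ ?_))) <;>
    simp only [Prod.fst_neg, Prod.snd_neg] <;> abel

/-- Embedding of degree `-2`. -/
def jA (r : SS G) : L5 G := (r, 0, 0, 0, 0)
/-- Embedding of degree `-1`. -/
def jB (a : A) : L5 G := (0, a, 0, 0, 0)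
/-- Embedding of degree `0`. -/
def jC (T : L0 G) : L5 G := (0, 0, T, 0, 0)
/-- Embedding of degree `1`. -/
def jD (a : A) : L5 G := (0, 0, 0, a, 0)
/-- Embedding of degree `2`. -/
def jE (r : SS G) : L5 G := (0, 0, 0, 0, r)

theorem L5_ext {X Y : L5 G} (h1 : X.1 = Y.1) (h2 : X.2.1 = Y.2.1) (h3 : X.2.2.1 = Y.2.2.1)
    (h4 : X.2.2.2.1 = Y.2.2.2.1) (h5 : X.2.2.2.2 = Y.2.2.2.2) : X = Y :=
  Prod.ext h1 (Prod.ext h2 (Prod.ext h3 (Prod.ext h4 h5)))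

theorem jA_add (a b : SS G) : jA G a + jA G b = jA G (a + b) := by simp [jA]
theorem jB_add (a b : A) : jB G a + jB G b = jB G (a + b) := by simp [jB]
theorem jC_add (a b : L0 G) : jC G a + jC G b = jC G (a + b) := by simp [jC]
theorem jD_add (a b : A) : jD G a + jD G b = jD G (a + b) := by simp [jD]
theorem jE_add (a b : SS G) : jE G a + jE G b = jE G (a + b) := by simp [jE]
theorem jA_neg (a : SS G) : -jA G a = jA G (-a) := by simp [jA]
theorem jB_neg (a : A) : -jB G a = jB G (-a) := by simp [jB]
theorem jC_neg (a : L0 G) : -jC G a = jC G (-a) := by simp [jC]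
theorem jD_neg (a : A) : -jD G a = jD G (-a) := by simp [jD]
theorem jE_neg (a : SS G) : -jE G a = jE G (-a) := by simp [jE]
theorem jA_smul (c : k) (a : SS G) : c • jA G a = jA G (c • a) := by simp [jA]
theorem jB_smul (c : k) (a : A) : c • jB G a = jB G (c • a) := by simp [jB]
theorem jD_smul (c : k) (a : A) : c • jD G a = jD G (c • a) := by simp [jD]
theorem jE_smul (c : k) (a : SS G) : c • jE G a = jE G (c • a) := by simp [jE]
theorem jA_zero : jA G 0 = 0 := rfl
theorem jB_zero : jB G 0 = 0 := rfl
theorem jC_zero : jC G 0 = 0 := rfl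
theorem jD_zero : jD G 0 = 0 := rfl
theorem jE_zero : jE G 0 = 0 := rfl

theorem br_DA (x : A) (r : SS G) : br G (jD G x) (jA G r) = jB G (-lm G r x) := by
  rw [br_apply]; simp [br0, bA, bB, bC, bD, bE, jA, jB, jD]
theorem br_DB (x a : A) : br G (jD G x) (jB G a) = jC G (VL G x a) := by
  rw [br_apply]; simp [br0, bA, bB, bC, bD, bE, jC, jB, jD]
theorem br_DC (x : A) (T : L0 G) : br G (jD G x) (jC G T) = jD G (-p1 G T x) := by
  rw [br_apply]; simp [br0, bA, bB, bC, bD, bE, jC, jB, jD]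
theorem br_DD (x a : A) : br G (jD G x) (jD G a) = jE G (psi G x a) := by
  rw [br_apply]; simp [br0, bA, bB, bC, bD, bE, jE, jB, jD]
theorem br_DE (x : A) (r : SS G) : br G (jD G x) (jE G r) = 0 := by
  rw [br_apply]; simp [br0, bA, bB, bC, bD, bE, jE, jB, jD]
theorem br_EA (s : SS G) (r : SS G) : br G (jE G s) (jA G r) = jC G (WL G s r) := by
  rw [br_apply]; simp [br0, bA, bB, bC, bD, bE, jA, jE, jC]
theorem br_EB (s : SS G) (a : A) : br G (jE G s) (jB G a) = jD G (lm G s a) := by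
  rw [br_apply]; simp [br0, bA, bB, bC, bD, bE, jB, jE, jD]
theorem br_EC (s : SS G) (T : L0 G) : br G (jE G s) (jC G T) = jE G (-p3 G T s) := by
  rw [br_apply]; simp [br0, bA, bB, bC, bD, bE, jC, jE, jD]
theorem br_ED (s : SS G) (a : A) : br G (jE G s) (jD G a) = 0 := by
  rw [br_apply]; simp [br0, bA, bB, bC, bD, bE, jC, jE, jD]
theorem br_EE (s r : SS G) : br G (jE G s) (jE G r) = 0 := by
  rw [br_apply]; simp [br0, bA, bB, bC, bD, bE, jC, jE, jD]
theorem br_BA (y : A) (r : SS G) : br G (jB G y) (jA G r) = 0 := by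
  rw [br_apply]; simp [br0, bA, bB, bC, bD, bE, jB, jA, jD]
theorem br_BB (y a : A) : br G (jB G y) (jB G a) = jA G (psi G y a) := by
  rw [br_apply]; simp [br0, bA, bB, bC, bD, bE, jB, jA, jD]
theorem br_AA (r s : SS G) : br G (jA G r) (jA G s) = 0 := by
  rw [br_apply]; simp [br0, bA, bB, bC, bD, bE, jB, jA, jD]
theorem br_CA (T : L0 G) (r : SS G) : br G (jC G T) (jA G r) = jA G (p4 G T r) := by
  rw [br_apply]; simp [br0, bA, bB, bC, bD, bE, jC, jA, jD]
theorem br_CB (T : L0 G) (a : A) : br G (jC G T) (jB G a) = jB G (p2 G T a) := by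
  rw [br_apply]; simp [br0, bA, bB, bC, bD, bE, jC, jB, jD]
theorem br_CD (T : L0 G) (a : A) : br G (jC G T) (jD G a) = jD G (p1 G T a) := by
  rw [br_apply]; simp [br0, bA, bB, bC, bD, bE, jC, jB, jD]
theorem br_CE (T : L0 G) (r : SS G) : br G (jC G T) (jE G r) = jE G (p3 G T r) := by
  rw [br_apply]; simp [br0, bA, bB, bC, bD, bE, jC, jE, jD]

/-- The grading element. -/
def gr : L0 G := ⟨(1, -1, (2 : k) • 1, -((2 : k) • 1)), by
  refine ⟨?_, ?_, ?_, ?_, ?_, ?_⟩ <;> intros <;>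
    simp only [Module.End.one_apply, LinearMap.neg_apply, LinearMap.smul_apply, map_neg, map_smul]
    <;> module⟩

theorem p1_gr (a : A) : p1 G (gr G) a = a := rfl
theorem p2_gr (a : A) : p2 G (gr G) a = -a := rfl
theorem p3_gr (a : SS G) : p3 G (gr G) a = (2 : k) • a := rfl
theorem p4_gr (a : SS G) : p4 G (gr G) a = -((2 : k) • a) := rfl
end lie0
end StrAux

namespace StrAux

section abstr

variable {k : Type*} [Field k] {L : Type*} [AddCommGroup L] [Module k L]

/-- Two commuting derivations of an algebra with skew-symmetric product. -/
structure Ders (br : L →ₗ[k] L →ₗ[k] L) (D S : L →ₗ[k] L) : Prop where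
  h2 : (2 : k) ≠ 0
  h3 : (3 : k) ≠ 0
  sk : ∀ a b, br a b = -br b a
  D1 : ∀ a b, D (br a b) = br (D a) b + br a (D b)
  S1 : ∀ a b, S (br a b) = br (S a) b + br a (S b)
  C1 : ∀ a, S (D a) = D (S a)

/-- Divided power component. -/
def e2 (D S : L →ₗ[k] L) (v : L) : L := D (D v) + S v
/-- Divided power component. -/
def e3 (D S : L →ₗ[k] L) (v : L) : L := (3 : k)⁻¹ • D (D (D v)) + D (S v)
/-- Divided power component. -/
def e4 (D S : L →ₗ[k] L) (v : L) : L :=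
  (6 : k)⁻¹ • D (D (D (D v))) + D (D (S v)) + (2 : k)⁻¹ • S (S v)

/-- Vanishing conditions in degree `-1`. -/
structure N1 (D S : L →ₗ[k] L) (a : L) : Prop where
  x4 : D (D (D (D a))) = 0
  x2s : D (D (S a)) = 0
  ss : S (S a) = 0

/-- Vanishing conditions in degree `-2`. -/
structure N2 (D S : L →ₗ[k] L) (a : L) : Prop where
  x5 : D (D (D (D (D a)))) = 0
  x3s : D (D (D (S a))) = 0
  xss : D (S (S a)) = 0
  sss : S (S (S a)) = 0

variable {br : L →ₗ[k] L →ₗ[k] L} {D S : L →ₗ[k] L}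

theorem six_ne (h2 : (2 : k) ≠ 0) (h3 : (3 : k) ≠ 0) : (6 : k) ≠ 0 := by
  rw [show (6 : k) = 2 * 3 by norm_num]; exact mul_ne_zero h2 h3

theorem I4 (H : Ders br D S) {a b : L} (ha : N1 D S a) (hb : N1 D S b) :
    e4 D S (br a b) = (2 : k) • br (D a) (e3 D S b) + br (e2 D S a) (e2 D S b)
      + (2 : k) • br (e3 D S a) (D b) := by
  have h2 := H.h2
  have h3 := H.h3
  have h6 := six_ne h2 h3
  simp only [e2, e3, e4, H.D1, H.S1, H.C1, map_add, map_smul, LinearMap.add_apply,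
    LinearMap.smul_apply, ha.x4, ha.x2s, ha.ss, hb.x4, hb.x2s, hb.ss, map_zero,
    LinearMap.zero_apply]
  match_scalars <;> field_simp <;> ring

theorem I5 (H : Ders br D S) {a b : L} (ha : N1 D S a) (hb : N2 D S b) (hab : br a b = 0)
    (hx : br (D a) (D (D (D (D b)))) + (2 : k) • br (D (D a)) (D (D (D b)))
      + (2 : k) • br (D (D (D a))) (D (D b)) = 0) :
    br (D a) (e4 D S b) + br (e2 D S a) (e3 D S b) + br (e3 D S a) (e2 D S b) = 0 := by
  have h2 := H.h2
  have h3 := H.h3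
  have h6 := six_ne h2 h3
  have q1 := congrArg (fun v => D (D (D (S v)))) hab
  have q2 := congrArg (fun v => D (S (S v))) hab
  simp only [e2, e3, e4, H.D1, H.S1, H.C1, map_add, map_smul, LinearMap.add_apply,
    LinearMap.smul_apply, ha.x4, ha.x2s, ha.ss, hb.x5, hb.x3s, hb.xss, hb.sss, map_zero,
    LinearMap.zero_apply] at q1 q2 ⊢
  linear_combination (norm := skip) (6 : k)⁻¹ • hx + (3 : k)⁻¹ • q1 + (2 : k)⁻¹ • q2
  match_scalars <;> field_simp <;> ring

theorem I6 (H : Ders br D S) {a b : L} (ha : N2 D S a) (hb : N2 D S b) (hab : br a b = 0)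
    (hx : (3 : k) • br (D (D a)) (D (D (D (D b)))) + (4 : k) • br (D (D (D a))) (D (D (D b)))
      + (3 : k) • br (D (D (D (D a)))) (D (D b)) = 0) :
    br (e2 D S a) (e4 D S b) + (2 : k) • br (e3 D S a) (e3 D S b)
      + br (e4 D S a) (e2 D S b) = 0 := by
  have h2 := H.h2
  have h3 := H.h3
  have h6 := six_ne h2 h3
  have h18 : (18 : k) ≠ 0 := by
    rw [show (18 : k) = 6 * 3 by norm_num]; exact mul_ne_zero h6 h3
  have q1 := congrArg (fun v => D (D (D (D (S v))))) hab
  have q2 := congrArg (fun v => D (D (S (S v)))) hab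
  have q3 := congrArg (fun v => S (S (S v))) hab
  simp only [e2, e3, e4, H.D1, H.S1, H.C1, map_add, map_smul, LinearMap.add_apply,
    LinearMap.smul_apply, ha.x5, ha.x3s, ha.xss, ha.sss, hb.x5, hb.x3s, hb.xss, hb.sss, map_zero,
    LinearMap.zero_apply] at q1 q2 q3 ⊢
  linear_combination (norm := skip) (18 : k)⁻¹ • hx + (6 : k)⁻¹ • q1 + (2 : k)⁻¹ • q2
    + (6 : k)⁻¹ • q3
  match_scalars <;> field_simp <;> ring


/-- A lowering operator and the grading operator. -/
structure Sl2 (br : L →ₗ[k] L →ₗ[k] L) (D F Z : L →ₗ[k] L) : Prop where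
  F1 : ∀ a b, F (br a b) = br (F a) b + br a (F b)
  FD : ∀ v, F (D v) = D (F v) - Z v
  ZD : ∀ v, Z (D v) = D (Z v) + D v

theorem lad2 {F Z : L →ₗ[k] L} (Q : Sl2 br D F Z) {b : L} (hF : F b = 0)
    (hZ : Z b = -((2 : k) • b)) :
    F (D (D b)) = (3 : k) • D b ∧ F (D (D (D b))) = (3 : k) • D (D b) ∧
      F (D (D (D (D b)))) = (2 : k) • D (D (D b)) := by
  refine ⟨?_, ?_, ?_⟩ <;>
    simp only [Q.FD, Q.ZD, hF, hZ, map_add, map_sub, map_neg, map_smul, map_zero] <;> module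

theorem lad1 {F Z : L →ₗ[k] L} (Q : Sl2 br D F Z) {a : L} (hZ : Z a = -a)
    (h4 : D (D (D (D a))) = 0) :
    F (D (D a)) = D (D (F a)) + D a ∧ (2 : k) • D (D (D a)) = D (D (D (D (F a)))) := by
  have e : F (D (D (D (D a)))) = 0 := by rw [h4, map_zero]
  simp only [Q.FD, Q.ZD, hZ, map_add, map_sub, map_neg, map_smul, map_zero] at e ⊢
  constructor
  · module
  · linear_combination (norm := module) -e

theorem I6x {F Z : L →ₗ[k] L} (Q : Sl2 br D F Z) {a b : L} (hFa : F a = 0)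
    (hZa : Z a = -((2 : k) • a)) (hFb : F b = 0) (hZb : Z b = -((2 : k) • b))
    (z2 : br (D (D (D a))) (D (D (D (D b)))) = 0)
    (z3 : br (D (D (D (D a)))) (D (D (D b))) = 0) :
    (3 : k) • br (D (D a)) (D (D (D (D b)))) + (2 : k) • br (D (D (D a))) (D (D (D b))) = 0 ∧
    (2 : k) • br (D (D (D a))) (D (D (D b))) + (3 : k) • br (D (D (D (D a)))) (D (D b)) = 0 := by
  obtain ⟨a2, a3, a4⟩ := lad2 Q hFa hZa
  obtain ⟨b2, b3, b4⟩ := lad2 Q hFb hZb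
  have q2 := congrArg F z2
  have q3 := congrArg F z3
  simp only [Q.F1, a2, a3, a4, b2, b3, b4, map_smul, LinearMap.smul_apply, map_zero] at q2 q3
  exact ⟨q2, q3⟩

theorem I5x (h3 : (3 : k) ≠ 0) {F Z : L →ₗ[k] L} (Q : Sl2 br D F Z) {a b : L} (hFa : F (F a) = 0)
    (hZFa : Z (F a) = -((2 : k) • F a)) (hZa : Z a = -a) (h4 : D (D (D (D a))) = 0)
    (hFb : F b = 0) (hZb : Z b = -((2 : k) • b))
    (z1 : br (D (D a)) (D (D (D (D b)))) = 0)
    (z2 : br (D (D (D (F a)))) (D (D (D (D b)))) = 0)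
    (z3 : br (D (D (D (D (F a))))) (D (D (D b))) = 0) :
    br (D a) (D (D (D (D b)))) + (2 : k) • br (D (D a)) (D (D (D b)))
      + (2 : k) • br (D (D (D a))) (D (D b)) = 0 := by
  obtain ⟨q2, q3⟩ := I6x Q hFa hZFa hFb hZb z2 z3
  obtain ⟨b2, b3, b4⟩ := lad2 Q hFb hZb
  obtain ⟨a2, a3⟩ := lad1 Q hZa h4
  have q1 := congrArg F z1
  have q4 := congrArg (fun v => br v (D (D b))) a3
  simp only [Q.F1, a2, b4, map_smul, map_add, LinearMap.add_apply, LinearMap.smul_apply,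
    map_zero] at q1 q4
  linear_combination (norm := skip) q1 + q4 - (3 : k)⁻¹ • q2 + (3 : k)⁻¹ • q3
  match_scalars <;> field_simp <;> ring

/-- The one-invertibility system, in the Lie algebra. -/
structure Sys (br : L →ₗ[k] L →ₗ[k] L) (D S : L →ₗ[k] L) (xx ss ζ z t : L) : Prop where
  S0 : D z + e2 D S t = ζ
  S1 : e2 D S z = -xx - (2 : k) • e3 D S t
  S2 : e3 D S z = 0
  S3 : e4 D S t = ss

theorem sys_mk (H : Ders br D S) {xx ss ζ z t : L} (S0 : D z + e2 D S t = ζ)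
    (hDζ : D ζ = -xx) (hDxx : D xx = 0) (hSζ : S ζ = (2 : k) • ss)
    (hSz : S z = (3 : k)⁻¹ • D (D (D t)) - D (S t)) (h0 : D (D (S t)) = 0) :
    Sys br D S xx ss ζ z t := by
  have h2 := H.h2
  have h3 := H.h3
  have h6 := six_ne h2 h3
  have q1 := congrArg D S0
  have q2 := congrArg (fun v => D (D v)) S0
  have q3 := congrArg S S0
  have q4 := congrArg D hSz
  simp only [e2, map_add, map_neg, map_sub, map_smul, hDζ, hDxx, hSζ, H.C1, h0, neg_zero,
    sub_zero] at q1 q2 q3 q4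
  refine ⟨S0, ?_, ?_, ?_⟩ <;> simp only [e2, e3, e4, h0]
  · linear_combination (norm := skip) q1 + hSz
    match_scalars <;> field_simp <;> ring
  · linear_combination (norm := skip) (3 : k)⁻¹ • q2 + q4
    match_scalars <;> field_simp <;> ring
  · linear_combination (norm := skip) (2 : k)⁻¹ • q3 - (2 : k)⁻¹ • q4
    match_scalars <;> field_simp <;> ring

theorem e4_br (H : Ders br D S) {xx ss ζ z t a : L} (hs : Sys br D S xx ss ζ z t)
    (hDx : ∀ v, br xx v = D v) (hSs : ∀ v, br ss v = -S v) (hz : N1 D S z) (ha : N1 D S a)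
    (hζ : br ζ (e3 D S a) = (2 : k) • e3 D S a)
    (h5 : br (D a) (e4 D S t) + br (e2 D S a) (e3 D S t) + br (e3 D S a) (e2 D S t) = 0) :
    e4 D S (br z a) = e3 D S a := by
  have h2 := H.h2
  have h3 := H.h3
  rw [I4 H hz ha, hs.S1, hs.S2, eq_sub_of_add_eq hs.S0]
  rw [hs.S3, H.sk _ ss, hSs, H.sk _ (e3 D S t), H.sk _ (e2 D S t)] at h5
  simp only [map_sub, LinearMap.sub_apply, map_neg, LinearMap.neg_apply, map_smul,
    LinearMap.smul_apply, map_zero, LinearMap.zero_apply, hζ, hDx]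
  generalize hp : br (e3 D S t) (e2 D S a) = p at *
  generalize hq : br (e2 D S t) (e3 D S a) = q at *
  simp only [e2, e3, map_add, H.C1] at h5 ⊢
  linear_combination (norm := skip) (2 : k) • h5
  match_scalars <;> field_simp <;> ring

theorem fin_br (H : Ders br D S) {a b α β : L}  (ha : N1 D S a) (hb : N1 D S b)
    (hα : e4 D S α = e3 D S a) (hβ : e4 D S β = e3 D S b)
    (h5 : br (D a) (e4 D S β) + br (e2 D S a) (e3 D S β) + br (e3 D S a) (e2 D S β) = 0)
    (h5' : br (D b) (e4 D S α) + br (e2 D S b) (e3 D S α) + br (e3 D S b) (e2 D S α) = 0)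
    (h6 : br (e2 D S α) (e4 D S β) + (2 : k) • br (e3 D S α) (e3 D S β)
      + br (e4 D S α) (e2 D S β) = 0) :
    br (e2 D S a - (2 : k) • e3 D S α) (e2 D S b - (2 : k) • e3 D S β) = e4 D S (br a b) := by
  have h4 := I4 H ha hb
  rw [hα, H.sk (D b), H.sk (e2 D S b), H.sk (e3 D S b)] at h5'
  rw [hβ] at h5
  rw [hα, hβ] at h6
  simp only [map_sub, LinearMap.sub_apply, map_smul, LinearMap.smul_apply]
  linear_combination (norm := module) -h4 - (2 : k) • h5 + (2 : k) • h5' + (2 : k) • h6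

end abstr
end StrAux

namespace StrAux
section lie0

attribute [local instance] LieRing.ofAssociativeRing

variable {k : Type*} [Field k] {A : Type*} [NonAssocRing A] [Module k A]
    [SMulCommClass k A A] [IsScalarTower k A A] {bar : A → A}
variable (G : Good k A bar)

/-- The embeddings into the five-graded Lie algebra, `D = ad x` and `S = -ad s`. -/
structure Mod5 {L : Type*} [AddCommGroup L] [Module k L] (br : L →ₗ[k] L →ₗ[k] L)
    (jA : SS G →ₗ[k] L) (jB : A →ₗ[k] L) (jC : L0 G →ₗ[k] L) (jD : A →ₗ[k] L)
    (jE : SS G →ₗ[k] L) (x : A) (s : SS G) (D S : L →ₗ[k] L) : Prop where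
  inj : ∀ r r', jE r = jE r' → r = r'
  jac : ∀ X Y Z, br X (br Y Z) = br (br X Y) Z + br Y (br X Z)
  swap : ∀ X Y, br X Y = -br Y X
  br_DA : ∀ x r, br (jD x) (jA r) = jB (-lm G r x)
  br_DB : ∀ x a, br (jD x) (jB a) = jC (VL G x a)
  br_DC : ∀ x T, br (jD x) (jC T) = jD (-p1 G T x)
  br_DD : ∀ x a, br (jD x) (jD a) = jE (psi G x a)
  br_DE : ∀ x r, br (jD x) (jE r) = 0
  br_EA : ∀ s r, br (jE s) (jA r) = jC (WL G s r)
  br_EB : ∀ s a, br (jE s) (jB a) = jD (lm G s a)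
  br_EC : ∀ s T, br (jE s) (jC T) = jE (-p3 G T s)
  br_ED : ∀ s a, br (jE s) (jD a) = 0
  br_EE : ∀ s r, br (jE s) (jE r) = 0
  br_BA : ∀ y r, br (jB y) (jA r) = 0
  br_BB : ∀ y a, br (jB y) (jB a) = jA (psi G y a)
  br_AA : ∀ r s, br (jA r) (jA s) = 0
  br_CA : ∀ T r, br (jC T) (jA r) = jA (p4 G T r)
  br_CB : ∀ T a, br (jC T) (jB a) = jB (p2 G T a)
  br_CD : ∀ T a, br (jC T) (jD a) = jD (p1 G T a)
  br_CE : ∀ T r, br (jC T) (jE r) = jE (p3 G T r)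
  hD : ∀ v, D v = br (jD x) v
  hS : ∀ v, S v = -br (jE s) v

attribute [local irreducible] gr p1 p2 p3 p4 VL WL psi lm VE

section final

variable {L : Type*} [AddCommGroup L] [Module k L] {br : L →ₗ[k] L →ₗ[k] L}
    {jA : SS G →ₗ[k] L} {jB : A →ₗ[k] L} {jC : L0 G →ₗ[k] L} {jD : A →ₗ[k] L}
    {jE : SS G →ₗ[k] L} {x : A} {s : SS G} {D S : L →ₗ[k] L}

theorem DD_A (M : Mod5 G br jA jB jC jD jE x s D S) (r : SS G) : D (jA r) = jB (-lm G r x) := by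
  rw [M.hD, M.br_DA]
theorem ES_A (M : Mod5 G br jA jB jC jD jE x s D S) (r : SS G) : S (jA r) = jC (-WL G s r) := by
  rw [M.hS, M.br_EA, map_neg]
theorem DD_B (M : Mod5 G br jA jB jC jD jE x s D S) (a : A) : D (jB a) = jC (VL G x a) := by
  rw [M.hD, M.br_DB]
theorem ES_B (M : Mod5 G br jA jB jC jD jE x s D S) (a : A) : S (jB a) = jD (-lm G s a) := by
  rw [M.hS, M.br_EB, map_neg]
theorem DD_C (M : Mod5 G br jA jB jC jD jE x s D S) (T : L0 G) : D (jC T) = jD (-p1 G T x) := by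
  rw [M.hD, M.br_DC]
theorem ES_C (M : Mod5 G br jA jB jC jD jE x s D S) (T : L0 G) : S (jC T) = jE (p3 G T s) := by
  rw [M.hS, M.br_EC, map_neg, neg_neg]
theorem DD_D (M : Mod5 G br jA jB jC jD jE x s D S) (a : A) : D (jD a) = jE (psi G x a) := by
  rw [M.hD, M.br_DD]
theorem ES_D (M : Mod5 G br jA jB jC jD jE x s D S) (a : A) : S (jD a) = 0 := by
  rw [M.hS, M.br_ED, neg_zero]
theorem DD_E (M : Mod5 G br jA jB jC jD jE x s D S) (r : SS G) : D (jE r) = 0 := by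
  rw [M.hD, M.br_DE]
theorem ES_E (M : Mod5 G br jA jB jC jD jE x s D S) (r : SS G) : S (jE r) = 0 := by
  rw [M.hS, M.br_EE, neg_zero]

theorem ders (M : Mod5 G br jA jB jC jD jE x s D S) : Ders br D S where
  h2 := G.h2
  h3 := G.h3
  sk := M.swap
  D1 a b := by rw [M.hD, M.hD, M.hD, M.jac]
  S1 a b := by
    rw [M.hS, M.hS, M.hS, M.jac]
    simp only [map_neg, LinearMap.neg_apply]
    abel
  C1 a := by
    simp only [M.hS, M.hD]
    rw [M.jac (jE s), M.br_ED, map_zero, LinearMap.zero_apply, zero_add, map_neg]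

theorem n1 (M : Mod5 G br jA jB jC jD jE x s D S) (a : A) : N1 D S (jB a) where
  x4 := by rw [DD_B G M, DD_C G M, DD_D G M, DD_E G M]
  x2s := by rw [ES_B G M, DD_D G M, DD_E G M]
  ss := by rw [ES_B G M, ES_D G M]

theorem n2 (M : Mod5 G br jA jB jC jD jE x s D S) (r : SS G) : N2 D S (jA r) where
  x5 := by rw [DD_A G M, DD_B G M, DD_C G M, DD_D G M, DD_E G M]
  x3s := by rw [ES_A G M, DD_C G M, DD_D G M, DD_E G M]
  xss := by rw [ES_A G M, ES_C G M, DD_E G M]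
  sss := by rw [ES_A G M, ES_C G M, ES_E G M]

theorem sl2 (M : Mod5 G br jA jB jC jD jE x s D S) (y : A) (h : VL G x y = gr G) :
    Sl2 br D (br (jB y)) (br (jC (gr G))) where
  F1 := M.jac (jB y)
  FD v := by
    rw [M.hD, M.hD, M.jac (jB y) (jD x) v, M.swap (jB y) (jD x), M.br_DB, h,
      map_neg, LinearMap.neg_apply]
    abel
  ZD v := by
    rw [M.hD, M.hD, M.jac (jC (gr G)) (jD x) v, M.br_CD, p1_gr]
    abel

theorem grA (M : Mod5 G br jA jB jC jD jE x s D S) (r : SS G) : br (jC (gr G)) (jA r) = -((2 : k) • jA r) := by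
  rw [M.br_CA, p4_gr, ← map_smul jA, ← map_neg jA]
theorem grB (M : Mod5 G br jA jB jC jD jE x s D S) (a : A) : br (jC (gr G)) (jB a) = -jB a := by
  rw [M.br_CB, p2_gr, ← map_neg jB]
theorem grE (M : Mod5 G br jA jB jC jD jE x s D S) (r : SS G) : br (jC (gr G)) (jE r) = (2 : k) • jE r := by
  rw [M.br_CE, p3_gr, ← map_smul jE]

theorem gr_of {x : A} (hdiv : IsConjDivision bar) (hx : x ≠ 0) : ∃ y, VL G x y = gr G := by
  obtain ⟨y, hy⟩ := hdiv x hx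
  exact ⟨y, L0_ext G fun z => by rw [p1_VL, VE_apply, p1_gr, hy]⟩

theorem J6 (M : Mod5 G br jA jB jC jD jE x s D S) (hdiv : IsConjDivision bar) (a b : SS G) :
    br (e2 D S (jA a)) (e4 D S (jA b))
      + (2 : k) • br (e3 D S (jA a)) (e3 D S (jA b))
      + br (e4 D S (jA a)) (e2 D S (jA b)) = 0 := by
  refine I6 (ders G M) (n2 G M a) (n2 G M b) (M.br_AA a b) ?_
  by_cases hx : x = 0
  · subst hx
    simp only [M.hD, map_zero, LinearMap.zero_apply, smul_zero, add_zero]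
  · obtain ⟨y, hy⟩ := gr_of G hdiv hx
    obtain ⟨q1, q2⟩ := I6x (sl2 G M y hy) (M.br_BA y a) (grA G M a) (M.br_BA y b) (grA G M b)
      (by simp only [DD_A G M, DD_B G M, DD_C G M, DD_D G M, M.br_DE])
      (by simp only [DD_A G M, DD_B G M, DD_C G M, DD_D G M, M.br_ED])
    linear_combination (norm := module) q1 + q2

theorem J5 (M : Mod5 G br jA jB jC jD jE x s D S) (hdiv : IsConjDivision bar) (a : A) (b : SS G) :
    br (D (jB a)) (e4 D S (jA b))
      + br (e2 D S (jB a)) (e3 D S (jA b))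
      + br (e3 D S (jB a)) (e2 D S (jA b)) = 0 := by
  refine I5 (ders G M) (n1 G M a) (n2 G M b) (M.br_BA a b) ?_
  by_cases hx : x = 0
  · subst hx
    simp only [M.hD, map_zero, LinearMap.zero_apply, smul_zero, add_zero]
  · obtain ⟨y, hy⟩ := gr_of G hdiv hx
    refine I5x G.h3 (sl2 G M y hy) (by rw [M.br_BB, M.br_BA]) (by rw [M.br_BB, grA G M]) (grB G M a)
      (n1 G M a).x4 (M.br_BA y b) (grA G M b) ?_ ?_ ?_
    · simp only [DD_A G M, DD_B G M, DD_C G M, DD_D G M, M.br_DE]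
    · simp only [M.br_BB, DD_A G M, DD_B G M, DD_C G M, DD_D G M, M.br_DE]
    · simp only [M.br_BB, DD_A G M, DD_B G M, DD_C G M, DD_D G M, M.br_ED]

theorem psi_self (a : A) : psi G a a = 0 := by
  ext; simp [psi_coe, strPsi]

theorem p3_WL_self (s t : SS G) : (p3 G (WL G s t) s : A) = (2 : k) • (s * (t * s)) := by
  have h := p1_lm G (WL G s t) s 1
  rw [p1_WL, p2_WL] at h
  simp only [lm_apply, mul_one, mul_neg] at h
  linear_combination (norm := module) -h

theorem e2B (M : Mod5 G br jA jB jC jD jE x s D S) (a : A) :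
    e2 D S (jB a) = jD (-(VE G x a x + lm G s a)) := by
  rw [e2, DD_B G M, DD_C G M, ES_B G M, ← map_add jD, p1_VL]; congr 1; abel

theorem e3B (M : Mod5 G br jA jB jC jD jE x s D S) (a : A) : e3 D S (jB a)
    = jE ((3 : k)⁻¹ • psi G x (-VE G x a x) + psi G x (-lm G s a)) := by
  rw [e3, DD_B G M, DD_C G M, DD_D G M, ES_B G M, DD_D G M, ← map_smul jE, ← map_add jE, p1_VL]

theorem dsA (M : Mod5 G br jA jB jC jD jE x s D S) (r : SS G) : D (S (jA r)) = jD (lm G s (lm G r x)) := by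
  rw [ES_A G M, DD_C G M, map_neg (p1 G), LinearMap.neg_apply, p1_WL, neg_neg]

theorem dddA (M : Mod5 G br jA jB jC jD jE x s D S) (r : SS G) : D (D (D (jA r))) = jD (VE G x (lm G r x) x) := by
  rw [DD_A G M, DD_B G M, DD_C G M, map_neg (VL G x), map_neg (p1 G), LinearMap.neg_apply, p1_VL, neg_neg]

theorem e3A (M : Mod5 G br jA jB jC jD jE x s D S) (r : SS G) : e3 D S (jA r)
    = jD ((3 : k)⁻¹ • VE G x (lm G r x) x + lm G s (lm G r x)) := by
  rw [e3, dddA G M, dsA G M, ← map_smul jD, ← map_add jD]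

theorem e4A (M : Mod5 G br jA jB jC jD jE x s D S) (r : SS G) : e4 D S (jA r)
    = jE ((6 : k)⁻¹ • psi G x (VE G x (lm G r x) x) + psi G x (lm G s (lm G r x))
      + (2 : k)⁻¹ • -p3 G (WL G s r) s) := by
  have h : S (S (jA r)) = jE (-p3 G (WL G s r) s) := by
    rw [ES_A G M, ES_C G M, map_neg (p3 G), LinearMap.neg_apply]
  rw [e4, dddA G M, dsA G M, h, DD_D G M, DD_D G M]
  simp only [map_add jE, map_smul jE]

theorem sys_of (M : Mod5 G br jA jB jC jD jE x s D S) (u : A) (t : SS G)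
    (hsys1 : ∀ z : A, strTrip bar x u z = z + s * (t * z))
    (hsys2 : s * u = -((3 : k)⁻¹ • strTrip bar x (t * x) x))
    (hsys3 : strPsi bar x (s * (t * x)) = 0) :
    Sys br D S (jD x) (jE s) (jC (gr G)) (jB (u + lm G t x))
      (jA t) := by
  refine sys_mk (ders G M) ?_ ?_ ?_ ?_ ?_ ?_
  · rw [e2, DD_B G M, DD_A G M, DD_B G M, ES_A G M, ← map_add jC, ← map_add jC]
    congr 1
    apply L0_ext
    intro z
    simp only [map_add, map_neg, LinearMap.add_apply, LinearMap.neg_apply, p1_VL, p1_WL, p1_gr]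
    rw [VE_apply G x u z, hsys1]
    simp only [lm_apply]
    abel
  · rw [DD_C G M, p1_gr, ← map_neg jD]
  · rw [DD_D G M, psi_self, map_zero]
  · rw [ES_C G M, p3_gr, ← map_smul jE]
  · rw [dddA G M, dsA G M, ES_B G M, ← map_smul jD, sub_eq_add_neg, ← map_neg jD, ← map_add jD]
    congr 1
    rw [map_add, lm_apply G s u, hsys2, VE_apply, lm_apply G t x]
    abel
  · rw [dsA G M, DD_D G M]
    have : psi G x (lm G s (lm G t x)) = 0 := by
      apply Subtype.ext
      rw [psi_coe, lm_apply, lm_apply, hsys3]; rfl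
    rw [this, map_zero]

theorem P_eq (M : Mod5 G br jA jB jC jD jE x s D S) (z a : A) : e2 D S (jB a)
      - (2 : k) • e3 D S (jA (psi G z a))
    = jD (-strP k bar x s z a) := by
  rw [e2B G M, e3A G M, sub_eq_add_neg, ← map_smul jD, ← map_neg jD, ← map_add jD, strP]
  congr 1
  rw [← VE_apply G, ← psi_coe G, ← lm_apply G, ← lm_apply G]
  simp only [map_add, map_smul, LinearMap.add_apply, LinearMap.smul_apply]
  module

end final

theorem main' {L : Type*} [AddCommGroup L] [Module k L] {br : L →ₗ[k] L →ₗ[k] L}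
    {jA : SS G →ₗ[k] L} {jB : A →ₗ[k] L} {jC : L0 G →ₗ[k] L} {jD : A →ₗ[k] L}
    {jE : SS G →ₗ[k] L} {x : A} {s : SS G} {D S : L →ₗ[k] L}
    (M : Mod5 G br jA jB jC jD jE x s D S) (hdiv : IsConjDivision bar) (u : A) (t : SS G)
    (hsys1 : ∀ z : A, strTrip bar x u z = z + s * (t * z))
    (hsys2 : s * u = -((3 : k)⁻¹ • strTrip bar x (t * x) x))
    (hsys3 : strPsi bar x (s * (t * x)) = 0) (r : SS G) :
    (6 : k)⁻¹ • strPsi bar x (strTrip bar x (r * x) x)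
          + strPsi bar x (s * (r * x)) - s * (r * s)
        = (2 : k)⁻¹ • strPsi bar (strP k bar x s (u + t * x) r)
            (strP k bar x s (u + t * x) 1) := by
  have hs := sys_of G M u t hsys1 hsys2 hsys3
  have hr : ∀ a : A, e4 D S (jA (psi G (u + lm G t x) a)) = e3 D S (jB a) := by
    intro a
    rw [← M.br_BB]
    refine e4_br (ders G M) hs (fun v => (M.hD v).symm) (fun v => ?_) (n1 G M _) (n1 G M a) ?_
      (J5 G M hdiv a t)
    · rw [M.hS, neg_neg]
    · rw [e3B G M, grE G M]
  have key := fin_br (ders G M) (n1 G M r) (n1 G M 1) (hr r) (hr 1)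
    (J5 G M hdiv r _) (J5 G M hdiv 1 _) (J6 G M hdiv _ _)
  rw [P_eq G M, P_eq G M, M.br_DD, M.br_BB, e4A G M, SS_half] at key
  have key2 := congrArg (fun v : SS G => (v : A)) (M.inj _ _ key)
  simp only [map_neg, LinearMap.neg_apply, neg_neg, map_smul, LinearMap.smul_apply,
    Submodule.coe_add, Submodule.coe_smul, Submodule.coe_neg, psi_coe, VE_apply, lm_apply,
    p3_WL_self] at key2
  rw [key2]
  have h2 := G.h2
  have h6 := six_ne G.h2 G.h3
  match_scalars <;> field_simp <;> ring

/-- Linear version of the embedding. -/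
def lA : SS G →ₗ[k] L5 G where
  toFun := jA G
  map_add' a b := (jA_add G a b).symm
  map_smul' c a := (jA_smul G c a).symm
/-- Linear version of the embedding. -/
def lB : A →ₗ[k] L5 G where
  toFun := jB G
  map_add' a b := (jB_add G a b).symm
  map_smul' c a := (jB_smul G c a).symm
/-- Linear version of the embedding. -/
def lC : L0 G →ₗ[k] L5 G where
  toFun := jC G
  map_add' a b := (jC_add G a b).symm
  map_smul' c a := by simp [jC]
/-- Linear version of the embedding. -/
def lD : A →ₗ[k] L5 G where
  toFun := jD G
  map_add' a b := (jD_add G a b).symm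
  map_smul' c a := (jD_smul G c a).symm
/-- Linear version of the embedding. -/
def lE : SS G →ₗ[k] L5 G where
  toFun := jE G
  map_add' a b := (jE_add G a b).symm
  map_smul' c a := (jE_smul G c a).symm

theorem mod5 (x : A) (s : SS G) :
    Mod5 G (br G) (lA G) (lB G) (lC G) (lD G) (lE G) x s (br G (jD G x)) (-br G (jE G s)) where
  inj r r' h := congrArg (fun v : L5 G => v.2.2.2.2) h
  jac := br_jac G
  swap := br_swap G
  br_DA := br_DA G
  br_DB := br_DB G
  br_DC := br_DC G
  br_DD := br_DD G
  br_DE := br_DE G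
  br_EA := br_EA G
  br_EB := br_EB G
  br_EC := br_EC G
  br_ED := br_ED G
  br_EE := br_EE G
  br_BA := br_BA G
  br_BB := br_BB G
  br_AA := br_AA G
  br_CA := br_CA G
  br_CB := br_CB G
  br_CD := br_CD G
  br_CE := br_CE G
  hD _ := rfl
  hS _ := rfl

theorem main (x : A) (s : SS G) (hdiv : IsConjDivision bar) (u : A) (t : SS G)
    (hsys1 : ∀ z : A, strTrip bar x u z = z + s * (t * z))
    (hsys2 : s * u = -((3 : k)⁻¹ • strTrip bar x (t * x) x))
    (hsys3 : strPsi bar x (s * (t * x)) = 0) (r : SS G) :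
    (6 : k)⁻¹ • strPsi bar x (strTrip bar x (r * x) x)
          + strPsi bar x (s * (r * x)) - s * (r * s)
        = (2 : k)⁻¹ • strPsi bar (strP k bar x s (u + t * x) r)
            (strP k bar x s (u + t * x) 1) := by
  exact main' G (mod5 G x s) hdiv u t hsys1 hsys2 hsys3 r

end lie0
end StrAux

/-- Let `A` be a structurable division algebra over a field `k` with
`char k ≠ 2, 3`, let `(x,s) ∈ A × S` with `(x,s) ≠ (0,0)`, and let `(u,t) ∈ A × S`
satisfy the one-invertibility system.  With `z₀ := u + t·x` and
`P(a) := U_x(a + (2/3)·ψ(z₀,a)·x) + s·(a + 2·ψ(z₀,a)·x)`, for every `r ∈ S` one has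
`(1/6)·ψ(x, U_x(r·x)) + ψ(x, s·(r·x)) − s·(r·s) = (1/2)·ψ(P(r), P(1))`. -/
theorem stmt16 {k : Type*} [Field k] {A : Type*} [NonAssocRing A] [Module k A]
    [SMulCommClass k A A] [IsScalarTower k A A] [FiniteDimensional k A] [Nontrivial A]
    (h2 : (2 : k) ≠ 0) (h3 : (3 : k) ≠ 0)
    (bar : A → A) (hstr : IsStructurable k A bar) (hdiv : IsConjDivision bar)
    (x s : A) (hsS : bar s = -s) (hxs : ¬(x = 0 ∧ s = 0))
    (u t : A) (htS : bar t = -t)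
    (hsys1 : ∀ z : A, strTrip bar x u z = z + s * (t * z))
    (hsys2 : s * u = -((3 : k)⁻¹ • strTrip bar x (t * x) x))
    (hsys3 : strPsi bar x (s * (t * x)) = 0) :
    ∀ r : A, bar r = -r →
      (6 : k)⁻¹ • strPsi bar x (strTrip bar x (r * x) x)
          + strPsi bar x (s * (r * x)) - s * (r * s)
        = (2 : k)⁻¹ • strPsi bar (strP k bar x s (u + t * x) r)
            (strP k bar x s (u + t * x) 1) := by
  intro r hr
  have G : StrAux.Good k A bar := ⟨hstr, h2, h3⟩
  have := StrAux.main G x ⟨s, hsS⟩ hdiv u ⟨t, htS⟩ hsys1 hsys2 hsys3 ⟨r, hr⟩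
  exact this
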